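/- arXiv:1207.4802 — 4 statements merged into one kernel-verified Lean document; each statement's English description precedes it below -/
import Mathlib

section
/- Let x be an even natural number and let n be a natural number with 1 < n < x. If for every prime q with q < √x one has n mod q ≠ 0 and n ≢ x (mod q), then x − n = 1 or x − n is prime. -/
theorem eq_one_or_prime_of_forall_prime_sq_le_not_dvd {m : ℕ} (hm : m ≠ 0)
    (h : ∀ q : ℕ, q.Prime → q ^ 2 ≤ m → ¬ q ∣ m) : m = 1 ∨ m.Prime := by
  by_contra! ⟨hm_one, hm_prime⟩
  exact h m.minFac (Nat.minFac_prime hm_one)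
    (Nat.minFac_sq_le_self (Nat.pos_of_ne_zero hm) hm_prime) m.minFac_dvd

theorem sub_of_permitted_index_eq_one_or_prime_general (x n : ℕ) (hn : 0 < n) (hnx : n < x)
    (h : ∀ q : ℕ, q.Prime → (q : ℝ) < Real.sqrt x → ¬ q ∣ (x - n)) :
    x - n = 1 ∨ (x - n).Prime := by
  refine eq_one_or_prime_of_forall_prime_sq_le_not_dvd (Nat.sub_ne_zero_of_lt hnx)
    fun q hq hq_sq ↦ h q hq (Real.lt_sqrt_of_sq_lt ?_)
  have hq_sq_lt : q ^ 2 < x := hq_sq.trans_lt (Nat.sub_lt (hn.trans hnx) hn)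
  exact_mod_cast hq_sq_lt

/-- If `x` is even, `1 < n < x`, and for every prime `q < √x` we have `n mod q ≠ 0`
and `n ≢ x (mod q)` (i.e. `q` does not divide `x - n`), then `x - n = 1` or `x - n`
is prime. -/
theorem sub_of_permitted_index_eq_one_or_prime (x n : ℕ) (hx : 2 ∣ x)
    (h1 : 1 < n) (h2 : n < x)
    (h : ∀ q : ℕ, q.Prime → (q : ℝ) < Real.sqrt x → n % q ≠ 0 ∧ ¬ q ∣ (x - n)) :
    x - n = 1 ∨ (x - n).Prime :=
  sub_of_permitted_index_eq_one_or_prime_general x n (Nat.zero_lt_of_lt h1) h2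
    fun q hq hq_lt ↦ (h q hq hq_lt).2
end

section
/- The ratio c_k / m_k tends to 0 as k → ∞; that is, the real sequence ((p_1 − 1)/p_1) · ∏_{h=2}^{k} (p_h − 2)/p_h converges to 0 as k → ∞. -/
/-- The `h`-th prime number (1-indexed): `nthPrime 1 = 2`, `nthPrime 2 = 3`, ... -/
noncomputable def nthPrime (h : ℕ) : ℕ := Nat.nth Nat.Prime (h - 1)

/-- `mK k = p_1 * p_2 * ⋯ * p_k`, the product of the first `k` primes. -/
noncomputable def mK (k : ℕ) : ℕ := ∏ h ∈ Finset.Icc 1 k, nthPrime h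

/-- `cK k = (p_1 - 1) * (p_2 - 2) * ⋯ * (p_k - 2)`. -/
noncomputable def cK (k : ℕ) : ℕ := (nthPrime 1 - 1) * ∏ h ∈ Finset.Icc 2 k, (nthPrime h - 2)

/-- A selection of level `k`: a family of sets of residues `S h ⊆ {0, …, p_h - 1}`
with `|S 1| = 1` and `|S h| = 2` for `2 ≤ h ≤ k`. -/
def IsSelection (k : ℕ) (S : ℕ → Finset ℕ) : Prop :=
  (∀ h, 1 ≤ h → h ≤ k → S h ⊆ Finset.range (nthPrime h)) ∧
    (S 1).card = 1 ∧ ∀ h, 2 ≤ h → h ≤ k → (S h).card = 2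

/-- `n` is permitted for a selection of level `k` if for every `1 ≤ h ≤ k` the residue of
`n` modulo `p_h` is not a selected remainder. -/
def Permitted (k : ℕ) (S : ℕ → Finset ℕ) (n : ℕ) : Prop :=
  ∀ h ∈ Finset.Icc 1 k, n % nthPrime h ∉ S h

noncomputable instance (k : ℕ) (S : ℕ → Finset ℕ) : DecidablePred (Permitted k S) := fun n =>
  inferInstanceAs (Decidable (∀ h ∈ Finset.Icc 1 k, n % nthPrime h ∉ S h))

/-- The density `δ_k = c_k · p_k / m_k` of permitted `k`-tuples within a period. -/
noncomputable def deltaK (k : ℕ) : ℝ := (cK k : ℝ) * nthPrime k / mK k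

/-!
Each factor is `(p_h - 2) / p_h = 1 - 2 / p_h ≤ exp (-2 / p_h)`, so the product over `2 ≤ h ≤ k` is
at most `exp (-2 ∑ 1 / p_h)`, which tends to `0` because the sum of the reciprocals of the primes
diverges.
-/

open Filter Finset Topology

lemma prod_one_sub_le_exp_neg_sum {ι : Type*} {s : Finset ι} {f : ι → ℝ}
    (hf : ∀ i ∈ s, f i ≤ 1) : ∏ i ∈ s, (1 - f i) ≤ Real.exp (-∑ i ∈ s, f i) := by
  rw [← sum_neg_distrib, Real.exp_sum]
  exact prod_le_prod (fun i hi ↦ sub_nonneg.2 (hf i hi)) fun i _ ↦ Real.one_sub_le_exp_neg (f i)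

lemma tendsto_prod_one_sub_nhds_zero {α ι : Type*} {l : Filter α} {s : α → Finset ι} {f : ι → ℝ}
    (hf : ∀ᶠ a in l, ∀ i ∈ s a, f i ≤ 1)
    (hsum : Tendsto (fun a ↦ ∑ i ∈ s a, f i) l atTop) :
    Tendsto (fun a ↦ ∏ i ∈ s a, (1 - f i)) l (𝓝 0) :=
  squeeze_zero' (hf.mono fun _ ha ↦ prod_nonneg fun i hi ↦ sub_nonneg.2 (ha i hi))
    (hf.mono fun _ ha ↦ prod_one_sub_le_exp_neg_sum ha)
    (Real.tendsto_exp_neg_atTop_nhds_zero.comp hsum)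

lemma tendsto_sum_Icc_atTop_of_not_summable {f : ℕ → ℝ} (hf : ∀ n, 0 ≤ f n) (hns : ¬Summable f)
    (m : ℕ) : Tendsto (fun n ↦ ∑ i ∈ Icc m n, f i) atTop atTop := by
  have hrange : Tendsto (fun n ↦ ∑ i ∈ range (n + 1), f i) atTop atTop :=
    (tendsto_add_atTop_iff_nat 1).2 ((not_summable_iff_tendsto_nat_atTop_of_nonneg hf).1 hns)
  refine (tendsto_atTop_add_const_right _ (-∑ i ∈ range m, f i) hrange).congr' ?_
  filter_upwards [eventually_ge_atTop m] with n hn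
  rw [← sub_eq_add_neg, ← sum_Ico_eq_sub f (by lia), Ico_add_one_right_eq_Icc]

lemma summable_comp_nth_iff {M : Type*} [AddCommMonoid M] [TopologicalSpace M] {p : ℕ → Prop}
    (hp : {n | p n}.Infinite) {f : ℕ → M} :
    Summable (fun n ↦ f (Nat.nth p n)) ↔ Summable ({n | p n}.indicator f) := by
  rw [← summable_subtype_iff_indicator, ← Nat.range_nth_of_infinite hp]
  exact (Equiv.ofInjective _ (Nat.nth_injective hp)).summable_iff (f := f ∘ (↑))

lemma prime_nthPrime (h : ℕ) : (nthPrime h).Prime :=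
  Nat.prime_nth_prime (h - 1)

lemma not_summable_one_div_nthPrime : ¬Summable fun h ↦ (1 : ℝ) / nthPrime h := by
  intro hsum
  -- The shift by one drops the junk index `h = 0`, where `nthPrime 0 = 2` too.
  have hnth : Summable fun n ↦ (1 : ℝ) / Nat.nth Nat.Prime n := (summable_nat_add_iff 1).2 hsum
  exact not_summable_one_div_on_primes ((summable_comp_nth_iff Nat.infinite_setOfPred_prime).1 hnth)

/-- `c_k / m_k → 0`: the sequence `((p_1 - 1)/p_1) · ∏_{h=2}^{k} (p_h - 2)/p_h` converges
to `0` as `k → ∞`. -/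
theorem ck_div_mk_tendsto_zero :
    Filter.Tendsto
      (fun k : ℕ => ((nthPrime 1 : ℝ) - 1) / (nthPrime 1) *
        ∏ h ∈ Finset.Icc 2 k, ((nthPrime h : ℝ) - 2) / (nthPrime h))
      Filter.atTop (nhds 0) := by
  have hsum : ¬Summable fun h ↦ (2 : ℝ) / nthPrime h := by
    simpa [div_eq_mul_inv, summable_mul_left_iff] using not_summable_one_div_nthPrime
  have hle (h : ℕ) : (2 : ℝ) / nthPrime h ≤ 1 :=
    div_le_one_of_le₀ (mod_cast (prime_nthPrime h).two_le) (Nat.cast_nonneg _)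
  have hprod : Tendsto (fun k ↦ ∏ h ∈ Icc 2 k, (1 - (2 : ℝ) / nthPrime h)) atTop (𝓝 0) :=
    tendsto_prod_one_sub_nhds_zero (.of_forall fun _ h _ ↦ hle h)
      (tendsto_sum_Icc_atTop_of_not_summable (fun _ ↦ by positivity) hsum 2)
  have hfactor (h : ℕ) : ((nthPrime h : ℝ) - 2) / nthPrime h = 1 - 2 / nthPrime h := by
    rw [sub_div, div_self (mod_cast (prime_nthPrime h).ne_zero)]
  simpa only [hfactor, mul_zero] using hprod.const_mul (((nthPrime 1 : ℝ) - 1) / nthPrime 1)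
end

section
/- For every k ≥ 1, every selection (S_1, ..., S_k) of level k, and every residue class y modulo p_{k+1}, the number of integers n with 1 ≤ n ≤ m_k · p_{k+1} such that n is permitted for the selection and n ≡ y (mod p_{k+1}) equals c_k = (p_1 − 1)(p_2 − 2)⋯(p_k − 2); in particular this count is the same for all residue classes y modulo p_{k+1}. -/
/-!
Being permitted for a selection of level `k` is a condition of period `m_k`, and `n ≡ y` modulo
`p_{k+1}` is a condition of the coprime period `p_{k+1}`. By the Chinese remainder theorem, periodic
conditions with coprime periods are independent: the counts over their periods multiply. The first
condition is met `c_k` times per period, again by independence, now over the primes `p_1, …, p_k`,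
and the second exactly once.
-/

section PeriodicCount

open Finset Function

variable {ι : Type*}

theorem periodic_of_dvd {β : Type*} {f : ℕ → β} {a b : ℕ} (hf : Periodic f a) (hab : a ∣ b) :
    Periodic f b := by
  obtain ⟨c, rfl⟩ := hab
  exact mul_comm a c ▸ hf.nat_mul c

theorem periodic_and {P Q : ℕ → Prop} {a : ℕ} (hP : Periodic P a) (hQ : Periodic Q a) :
    Periodic (fun n => P n ∧ Q n) a :=
  fun n => congrArg₂ And (hP n) (hQ n)

theorem periodic_forall_mem_prod {P : ι → ℕ → Prop} {a : ι → ℕ} {s : Finset ι}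
    (hP : ∀ i ∈ s, Periodic (P i) (a i)) :
    Periodic (fun n => ∀ i ∈ s, P i n) (∏ i ∈ s, a i) :=
  fun n => propext <| forall₂_congr fun i hi =>
    (periodic_of_dvd (hP i hi) (dvd_prod_of_mem a hi) n).to_iff

theorem periodic_comp_mod {β : Type*} (f : ℕ → β) (a : ℕ) : Periodic (fun n => f (n % a)) a :=
  (Nat.periodic_mod a).comp f

theorem exists_lt_mul_mod_eq_and_mod_eq {a b x y : ℕ} (hab : a.Coprime b) (hx : x < a)
    (hy : y < b) : ∃ n < a * b, n % a = x ∧ n % b = y := by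
  let n := Nat.chineseRemainder hab x y
  exact ⟨n, Nat.chineseRemainder_lt_mul hab x y (Nat.ne_zero_of_lt hx) (Nat.ne_zero_of_lt hy),
    Nat.mod_eq_of_modEq n.2.1 hx, Nat.mod_eq_of_modEq n.2.2 hy⟩

theorem count_and_of_coprime_periodic {P Q : ℕ → Prop} [DecidablePred P] [DecidablePred Q]
    {a b : ℕ} (hab : a.Coprime b) (hP : Periodic P a) (hQ : Periodic Q b) :
    Nat.count (fun n => P n ∧ Q n) (a * b) = Nat.count P a * Nat.count Q b := by
  simp only [Nat.count_eq_card_filter_range, ← card_product]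
  refine card_nbij (fun n => (n % a, n % b)) ?maps ?inj ?surj
  case maps =>
    intro n hn
    obtain ⟨hn, hPn, hQn⟩ := mem_filter.1 hn
    have hab_pos : 0 < a * b := n.zero_le.trans_lt (mem_range.1 hn)
    simp only [mem_coe, mem_product, mem_filter, mem_range, hP.map_mod_nat, hQ.map_mod_nat]
    exact ⟨⟨n.mod_lt (Nat.pos_of_mul_pos_right hab_pos), hPn⟩,
      n.mod_lt (Nat.pos_of_mul_pos_left hab_pos), hQn⟩
  case inj =>
    intro n hn n' hn' h
    have hmod : n ≡ n' [MOD a * b] :=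
      (Nat.modEq_and_modEq_iff_modEq_mul hab).1 (Prod.mk.inj h)
    exact hmod.eq_of_lt_of_lt (mem_range.1 (mem_filter.1 hn).1) (mem_range.1 (mem_filter.1 hn').1)
  case surj =>
    rintro ⟨x, y⟩ hxy
    simp only [mem_coe, mem_product, mem_filter, mem_range] at hxy
    obtain ⟨⟨hxa, hPx⟩, hyb, hQy⟩ := hxy
    obtain ⟨n, hlt, hnx, hny⟩ := exists_lt_mul_mod_eq_and_mod_eq hab hxa hyb
    refine ⟨n, mem_filter.2 ⟨mem_range.2 hlt, ?_, ?_⟩, Prod.ext hnx hny⟩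
    · rwa [← hP.map_mod_nat, hnx]
    · rwa [← hQ.map_mod_nat, hny]

theorem count_forall_mem_of_coprime_periodic {P : ι → ℕ → Prop} [∀ i, DecidablePred (P i)]
    {a : ι → ℕ} {s : Finset ι} (ha : (s : Set ι).Pairwise (Nat.Coprime on a))
    (hP : ∀ i ∈ s, Periodic (P i) (a i)) :
    Nat.count (fun n => ∀ i ∈ s, P i n) (∏ i ∈ s, a i) = ∏ i ∈ s, Nat.count (P i) (a i) := by
  classical
  induction s using Finset.induction_on with
  | empty => simp
  | insert i s hi ih =>
    have hcoprime : (a i).Coprime (∏ j ∈ s, a j) := Nat.Coprime.prod_right fun j hj =>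
      ha (mem_insert_self i s) (mem_insert_of_mem hj) (ne_of_mem_of_not_mem hj hi).symm
    have hPs : ∀ j ∈ s, Periodic (P j) (a j) := fun j hj => hP j (mem_insert_of_mem hj)
    simp only [forall_mem_insert, prod_insert hi]
    rw [count_and_of_coprime_periodic hcoprime (hP i (mem_insert_self i s))
      (periodic_forall_mem_prod hPs), ih (ha.mono (coe_subset.2 (subset_insert i s))) hPs]

theorem count_comp_mod (P : ℕ → Prop) [DecidablePred P] (a : ℕ) :
    Nat.count (fun n => P (n % a)) a = Nat.count P a := by
  simp only [Nat.count_eq_card_filter_range]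
  congr 1
  exact filter_congr fun n hn => by rw [Nat.mod_eq_of_lt (mem_range.1 hn)]

theorem count_mod_eq {a y : ℕ} (hy : y < a) : Nat.count (fun n => n % a = y) a = 1 := by
  rw [count_comp_mod (· = y), Nat.count_eq_card_filter_range, filter_eq' (range a) y,
    if_pos (mem_range.2 hy), card_singleton]

theorem count_mod_notMem {a : ℕ} {T : Finset ℕ} (hT : T ⊆ range a) :
    Nat.count (fun n => n % a ∉ T) a = a - #T := by
  rw [count_comp_mod (· ∉ T), Nat.count_eq_card_filter_range, filter_notMem_eq_sdiff,
    card_sdiff_of_subset hT, card_range]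

theorem count_forall_mod_notMem {a : ι → ℕ} {s : Finset ι} {T : ι → Finset ℕ}
    (ha : (s : Set ι).Pairwise (Nat.Coprime on a)) (hT : ∀ i ∈ s, T i ⊆ range (a i)) :
    Nat.count (fun n => ∀ i ∈ s, n % a i ∉ T i) (∏ i ∈ s, a i) = ∏ i ∈ s, (a i - #(T i)) := by
  rw [count_forall_mem_of_coprime_periodic ha fun i _ => periodic_comp_mod (· ∉ T i) (a i)]
  exact prod_congr rfl fun i hi => count_mod_notMem (hT i hi)

end PeriodicCount

theorem coprime_nthPrime {i j : ℕ} (hi : 1 ≤ i) (hj : 1 ≤ j) (hij : i ≠ j) :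
    (nthPrime i).Coprime (nthPrime j) := by
  refine (Nat.coprime_primes (Nat.prime_nth_prime _) (Nat.prime_nth_prime _)).2 fun h => hij ?_
  have : i - 1 = j - 1 := Nat.nth_injective Nat.infinite_setOfPred_prime h
  omega

theorem coprime_mK_nthPrime {k h : ℕ} (hkh : k < h) : (mK k).Coprime (nthPrime h) :=
  Nat.Coprime.prod_left fun i hi => by
    obtain ⟨hi, hik⟩ := Finset.mem_Icc.1 hi
    exact coprime_nthPrime hi (by omega) (by omega)

theorem periodic_permitted (k : ℕ) (S : ℕ → Finset ℕ) :
    Function.Periodic (Permitted k S) (mK k) :=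
  periodic_forall_mem_prod fun h _ => periodic_comp_mod (· ∉ S h) (nthPrime h)

theorem count_permitted {k : ℕ} (hk : 1 ≤ k) {S : ℕ → Finset ℕ} (hS : IsSelection k S) :
    Nat.count (Permitted k S) (mK k) = cK k := by
  obtain ⟨hsub, hcard_one, hcard_two⟩ := hS
  calc
    Nat.count (Permitted k S) (mK k)
        = ∏ h ∈ Finset.Icc 1 k, (nthPrime h - (S h).card) :=
      count_forall_mod_notMem
        (fun _ hi _ hj => coprime_nthPrime (Finset.mem_Icc.1 hi).1 (Finset.mem_Icc.1 hj).1)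
        fun h hh => hsub h (Finset.mem_Icc.1 hh).1 (Finset.mem_Icc.1 hh).2
    _ = (nthPrime 1 - (S 1).card) * ∏ h ∈ Finset.Icc 2 k, (nthPrime h - (S h).card) := by
      rw [← Finset.insert_Icc_add_one_left_eq_Icc hk, Finset.prod_insert (by simp),
        one_add_one_eq_two]
    _ = cK k := by
      rw [cK, hcard_one]
      congr 1
      exact Finset.prod_congr rfl fun h hh => by
        rw [hcard_two h (Finset.mem_Icc.1 hh).1 (Finset.mem_Icc.1 hh).2]

/-- The permitted integers in the first `p_{k+1}` periods of `S_k` are uniformly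
distributed over the residue classes modulo `p_{k+1}`: for every residue `y`, the number of
permitted `n ∈ [1, m_k · p_{k+1}]` with `n ≡ y (mod p_{k+1})` equals `c_k`. -/
theorem permitted_uniform_distribution (k : ℕ) (hk : 1 ≤ k) (S : ℕ → Finset ℕ)
    (hS : IsSelection k S) (y : ℕ) (hy : y < nthPrime (k + 1)) :
    ((Finset.Icc 1 (mK k * nthPrime (k + 1))).filter
      (fun n => Permitted k S n ∧ n % nthPrime (k + 1) = y)).card = cK k := by
  have hpermitted : Function.Periodic (Permitted k S) (mK k) := periodic_permitted k S
  have hresidue : Function.Periodic (fun n => n % nthPrime (k + 1) = y) (nthPrime (k + 1)) :=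
    periodic_comp_mod (· = y) (nthPrime (k + 1))
  have hperiodic : Function.Periodic (fun n => Permitted k S n ∧ n % nthPrime (k + 1) = y)
      (mK k * nthPrime (k + 1)) :=
    periodic_and (periodic_of_dvd hpermitted (dvd_mul_right _ _))
      (periodic_of_dvd hresidue (dvd_mul_left _ (mK k)))
  rw [← Finset.Ico_add_one_right_eq_Icc, Nat.add_comm (mK k * nthPrime (k + 1)) 1,
    Nat.filter_Ico_card_eq_of_periodic _ _ _ hperiodic,
    count_and_of_coprime_periodic (coprime_mK_nthPrime k.lt_succ_self) hpermitted hresidue,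
    count_permitted hk hS, count_mod_eq hy, mul_one]
end

section
/- Average density over all selections: for every k ≥ 1 and all natural numbers a ≤ b, the sum over all selections (S_1, ..., S_k) of level k of the number of integers n with a ≤ n ≤ b that are permitted for the selection equals N_k · (b − a + 1) · ((p_1 − 1)/p_1) · ∏_{h=2}^{k} (p_h − 2)/p_h, where N_k = p_1 · ∏_{h=2}^{k} C(p_h, 2) is the total number of selections of level k; equivalently, the average over all selections of the density of permitted integers in the interval [a, b] equals δ_k. -/
/-- The finite set of all selections of level `k`, viewed as dependent functions on
`Finset.Icc 1 k`: `S h ⊆ {0, …, p_h - 1}` with `|S 1| = 1` and `|S h| = 2` for `h ≥ 2`. -/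
noncomputable def selections (k : ℕ) : Finset ((h : ℕ) → h ∈ Finset.Icc 1 k → Finset ℕ) :=
  (Finset.Icc 1 k).pi fun h =>
    (Finset.range (nthPrime h)).powerset.filter
      (fun s => s.card = if h = 1 then 1 else 2)

/-!
Count the pairs of a selection `S` and an integer `n` permitted for `S` by summing over `n` first.
For a fixed `n`, being permitted constrains each `S h` independently: `S h` must avoid the single
residue of `n` modulo `p_h`. Of the `C(p, c)` sets of `c` residues modulo `p`, exactly
`C(p - 1, c) = C(p, c) (p - c) / p` do so, and this number does not depend on `n`.
-/

open Finset

theorem filter_notMem_powersetCard {α : Type*} [DecidableEq α] (s : Finset α) (a : α) (c : ℕ) :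
    {t ∈ s.powersetCard c | a ∉ t} = (s.erase a).powersetCard c := by
  ext t
  simp only [mem_filter, mem_powersetCard, subset_erase]
  tauto

theorem cast_choose_pred {K : Type*} [Field K] [CharZero K] {n : ℕ} (hn : n ≠ 0) (c : ℕ) :
    ((n - 1).choose c : K) = n.choose c * (((n : K) - c) / n) := by
  obtain ⟨m, rfl⟩ := Nat.exists_eq_succ_of_ne_zero hn
  rw [← mul_div_assoc, eq_div_iff (Nat.cast_ne_zero.mpr hn)]
  obtain hc | hc := le_or_gt c (m + 1)
  · rw [← Nat.cast_sub hc]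
    exact_mod_cast Nat.choose_mul_succ_eq m c
  · simp [Nat.choose_eq_zero_of_lt hc, Nat.choose_eq_zero_of_lt (show m < c by lia)]

section AvoidingFamilies

variable {ι : Type*} {α : ι → Type*} [DecidableEq ι]

theorem filter_forall_pi (s : Finset ι) (t : ∀ i, Finset (α i))
    (p : ∀ i, α i → Prop) [∀ i, DecidablePred (p i)] :
    {f ∈ s.pi t | ∀ i, ∀ hi : i ∈ s, p i (f i hi)} = s.pi fun i ↦ {x ∈ t i | p i x} := by
  ext f
  simp only [mem_filter, mem_pi, forall_and]

variable [∀ i, DecidableEq (α i)] {s : Finset ι} {t : ∀ i, Finset (α i)}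

theorem card_filter_forall_notMem_pi_powersetCard {x : ∀ i, α i} (hx : ∀ i ∈ s, x i ∈ t i)
    (c : ι → ℕ) :
    #{S ∈ s.pi fun i ↦ (t i).powersetCard (c i) | ∀ i, ∀ hi : i ∈ s, x i ∉ S i hi} =
      ∏ i ∈ s, (#(t i) - 1).choose (c i) := by
  rw [filter_forall_pi s (fun i ↦ (t i).powersetCard (c i)) fun i u ↦ x i ∉ u, card_pi]
  refine prod_congr rfl fun i hi ↦ ?_
  rw [filter_notMem_powersetCard, card_powersetCard, card_erase_of_mem (hx i hi)]

theorem sum_card_filter_forall_notMem_pi_powersetCard {β K : Type*} [Field K] [CharZero K]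
    {A : Finset β} {x : β → ∀ i, α i} (hx : ∀ n ∈ A, ∀ i ∈ s, x n i ∈ t i) (c : ι → ℕ) :
    ∑ S ∈ s.pi fun i ↦ (t i).powersetCard (c i),
        (#{n ∈ A | ∀ i, ∀ hi : i ∈ s, x n i ∉ S i hi} : K) =
      (∏ i ∈ s, (#(t i)).choose (c i) : ℕ) * #A * ∏ i ∈ s, ((#(t i) : K) - c i) / #(t i) := by
  by_cases hA : A = ∅
  · simp [hA]
  obtain ⟨n₀, hn₀⟩ := nonempty_iff_ne_empty.mpr hA
  have ht : ∀ i ∈ s, #(t i) ≠ 0 := fun i hi ↦ card_ne_zero_of_mem (hx n₀ hn₀ i hi)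
  have double_count :
      ∑ S ∈ s.pi fun i ↦ (t i).powersetCard (c i), #{n ∈ A | ∀ i, ∀ hi : i ∈ s, x n i ∉ S i hi} =
        #A * ∏ i ∈ s, (#(t i) - 1).choose (c i) := by
    rw [← smul_eq_mul, ← sum_const]
    exact (sum_card_bipartiteAbove_eq_sum_card_bipartiteBelow _).trans <|
      sum_congr rfl fun n hn ↦ card_filter_forall_notMem_pi_powersetCard (hx n hn) c
  rw [← Nat.cast_sum, double_count, Nat.cast_mul, Nat.cast_prod,
    prod_congr rfl fun i hi ↦ cast_choose_pred (ht i hi) (c i), prod_mul_distrib, Nat.cast_prod]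
  ring

end AvoidingFamilies

theorem nthPrime_pos (h : ℕ) : 0 < nthPrime h :=
  (Nat.prime_nth_prime _).pos

theorem selections_eq_pi_powersetCard (k : ℕ) :
    selections k =
      (Icc 1 k).pi fun h ↦ (range (nthPrime h)).powersetCard (if h = 1 then 1 else 2) := by
  simp only [selections, powersetCard_eq_filter]

theorem prod_Icc_one_ite_eq_mul {M γ : Type*} [CommMonoid M] (f : ℕ → γ → M) {k : ℕ}
    (hk : 1 ≤ k) (c d : γ) :
    ∏ h ∈ Icc 1 k, f h (if h = 1 then c else d) = f 1 c * ∏ h ∈ Icc 2 k, f h d := by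
  rw [← mul_prod_Ioc_eq_prod_Icc hk, if_pos rfl, ← Icc_add_one_left_eq_Ioc]
  congr 1
  refine prod_congr rfl fun h hh ↦ ?_
  rw [if_neg (by grind)]

/-- Average density over all selections: the sum, over all selections of level `k`, of the
number of permitted integers in `[a, b]` equals
`N_k · (b - a + 1) · ((p_1 - 1)/p_1) · ∏_{h=2}^{k} (p_h - 2)/p_h`, where
`N_k = p_1 · ∏_{h=2}^{k} C(p_h, 2)` is the number of selections of level `k`; equivalently,
the average density of permitted integers in `[a, b]` equals `δ_k`. -/
theorem sum_selections_card_permitted (k : ℕ) (hk : 1 ≤ k) (a b : ℕ) (hab : a ≤ b) :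
    (∑ S ∈ selections k,
        (((Finset.Icc a b).filter
          (fun n => ∀ h, ∀ hh : h ∈ Finset.Icc 1 k, n % nthPrime h ∉ S h hh)).card : ℝ))
      = ((nthPrime 1 * ∏ h ∈ Finset.Icc 2 k, (nthPrime h).choose 2 : ℕ) : ℝ)
        * ((b : ℝ) - a + 1)
        * (((nthPrime 1 : ℝ) - 1) / nthPrime 1)
        * ∏ h ∈ Finset.Icc 2 k, ((nthPrime h : ℝ) - 2) / nthPrime h := by
  have residue_mem : ∀ n ∈ Icc a b, ∀ h ∈ Icc 1 k, n % nthPrime h ∈ range (nthPrime h) :=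
    fun n _ h _ ↦ mem_range.mpr (Nat.mod_lt n (nthPrime_pos h))
  have card_Icc_cast : (#(Icc a b) : ℝ) = b - a + 1 := by
    rw [Nat.card_Icc, Nat.cast_sub (by lia)]
    push_cast
    ring
  rw [selections_eq_pi_powersetCard, sum_card_filter_forall_notMem_pi_powersetCard residue_mem]
  simp only [card_range]
  rw [prod_Icc_one_ite_eq_mul (fun h (c : ℕ) ↦ (nthPrime h).choose c) hk,
    prod_Icc_one_ite_eq_mul (fun h (c : ℕ) ↦ ((nthPrime h : ℝ) - c) / nthPrime h) hk,
    Nat.choose_one_right, card_Icc_cast, Nat.cast_one, Nat.cast_ofNat, ← mul_assoc]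
end
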